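/- Let F be a Banach space with cotype q (2 ≤ q < ∞), let q_1, …, q_s ∈ [1, ∞), and suppose every continuous s-linear form on E_1 × ⋯ × E_s is absolutely (1; q_1, …, q_s)-summing. Then for any choice of Banach spaces E_{s+1}, …, E_n, every continuous n-linear map from E_1 × ⋯ × E_n into F is absolutely (q; q_1, …, q_s, 1, …, 1)-summing. -/

import Mathlib

open MeasureTheory

/-- Weak `ℓ_q` norm of a finite family in a normed space. -/
noncomputable def weakLpNorm (𝕜 : Type*) [RCLike 𝕜] {E : Type*} [NormedAddCommGroup E]
    [NormedSpace 𝕜 E] (q : ℝ) {m : ℕ} (x : Fin m → E) : ℝ :=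
  ⨆ φ : {φ : E →L[𝕜] 𝕜 // ‖φ‖ ≤ 1}, (∑ j, ‖φ.1 (x j)‖ ^ q) ^ (1 / q)

/-- `T` satisfies the `p`-semi-integral inequality with constant `C`, witnessed by a regular
Borel probability measure on the product of the closed dual unit balls with their
weak-star topologies. -/
def SemiIntegralWith (𝕜 : Type*) [RCLike 𝕜] {ι : Type*} [Fintype ι] {E : ι → Type*}
    [∀ i, NormedAddCommGroup (E i)] [∀ i, NormedSpace 𝕜 (E i)]
    {F : Type*} [NormedAddCommGroup F]
    (p C : ℝ) (T : (∀ i, E i) → F) : Prop :=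
  letI : MeasurableSpace (∀ i, {φ : WeakDual 𝕜 (E i) // ∀ z, ‖φ z‖ ≤ ‖z‖}) := borel _
  ∃ μ : Measure (∀ i, {φ : WeakDual 𝕜 (E i) // ∀ z, ‖φ z‖ ≤ ‖z‖}),
    IsProbabilityMeasure μ ∧ μ.Regular ∧
      ∀ x : ∀ i, E i,
        ‖T x‖ ≤ C * (∫ φ, ∏ i, ‖(φ i).1 (x i)‖ ^ p ∂μ) ^ (1 / p)

/-- The `si,p` norm: infimum of admissible constants. -/
noncomputable def siNorm (𝕜 : Type*) [RCLike 𝕜] {ι : Type*} [Fintype ι] {E : ι → Type*}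
    [∀ i, NormedAddCommGroup (E i)] [∀ i, NormedSpace 𝕜 (E i)]
    {F : Type*} [NormedAddCommGroup F]
    (p : ℝ) (T : (∀ i, E i) → F) : ℝ :=
  sInf {C : ℝ | 0 ≤ C ∧ SemiIntegralWith 𝕜 p C T}

/-- `T` is absolutely `(p; q₁,…,qₙ)`-summing with constant `C`. -/
def AbsSummingWith (𝕜 : Type*) [RCLike 𝕜] {ι : Type*} [Fintype ι] {E : ι → Type*}
    [∀ i, NormedAddCommGroup (E i)] [∀ i, NormedSpace 𝕜 (E i)]
    {F : Type*} [NormedAddCommGroup F]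
    (p : ℝ) (q : ι → ℝ) (C : ℝ) (T : (∀ i, E i) → F) : Prop :=
  ∀ (m : ℕ) (x : ∀ i, Fin m → E i),
    (∑ j, ‖T (fun i => x i j)‖ ^ p) ^ (1 / p) ≤ C * ∏ i, weakLpNorm 𝕜 (q i) (x i)

/-- `T` is `p`-dominated with constant `C`, witnessed by regular Borel probability measures
on the closed dual unit balls with their weak-star topologies. -/
def DominatedWith (𝕜 : Type*) [RCLike 𝕜] {ι : Type*} [Fintype ι] {E : ι → Type*}
    [∀ i, NormedAddCommGroup (E i)] [∀ i, NormedSpace 𝕜 (E i)]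
    {F : Type*} [NormedAddCommGroup F]
    (p C : ℝ) (T : (∀ i, E i) → F) : Prop :=
  letI : ∀ i, MeasurableSpace {φ : WeakDual 𝕜 (E i) // ∀ z, ‖φ z‖ ≤ ‖z‖} := fun i => borel _
  ∃ μ : ∀ i, Measure {φ : WeakDual 𝕜 (E i) // ∀ z, ‖φ z‖ ≤ ‖z‖},
    (∀ i, IsProbabilityMeasure (μ i)) ∧ (∀ i, (μ i).Regular) ∧
      ∀ x : ∀ i, E i,
        ‖T x‖ ≤ C * ∏ i, (∫ φ, ‖φ.1 (x i)‖ ^ p ∂(μ i)) ^ (1 / p)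

/-- `E` is an `𝓛_∞`-space. -/
def IsLinftySpace (𝕜 : Type*) [RCLike 𝕜] (E : Type*) [NormedAddCommGroup E]
    [NormedSpace 𝕜 E] : Prop :=
  ∃ lam : ℝ, 1 ≤ lam ∧ ∀ M : Submodule 𝕜 E, FiniteDimensional 𝕜 M →
    ∃ N : Submodule 𝕜 E, M ≤ N ∧ FiniteDimensional 𝕜 N ∧
      ∃ v : N ≃L[𝕜] (Fin (Module.finrank 𝕜 N) → 𝕜),
        ‖(v : N →L[𝕜] (Fin (Module.finrank 𝕜 N) → 𝕜))‖ *
          ‖(v.symm : (Fin (Module.finrank 𝕜 N) → 𝕜) →L[𝕜] N)‖ ≤ lam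

/-- `F` has cotype `q`. -/
def HasCotype (q : ℝ) (F : Type*) [NormedAddCommGroup F] : Prop :=
  ∃ C : ℝ, 0 ≤ C ∧ ∀ (m : ℕ) (x : Fin m → F),
    (∑ j, ‖x j‖ ^ q) ^ (1 / q) ≤
      C * ((∑ ε : Fin m → Bool, ‖∑ j, (if ε j then x j else -x j)‖ ^ (2 : ℝ)) / 2 ^ m)
        ^ ((1 : ℝ) / 2)

universe u v

lemma signSum_sub_flip {E : Type*} [AddCommGroup E] {m : ℕ} (y : Fin m → E) (ε : Fin m → Bool)
    (j : Fin m) :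
    (∑ i, (if ε i then y i else -y i)) -
      (∑ i, (if Function.update ε j (!ε j) i then y i else -y i)) =
      if ε j then y j + y j else -(y j + y j) := by
  rw [← Finset.sum_sub_distrib, Finset.sum_eq_single j]
  · cases h : ε j <;> simp [sub_eq_add_neg]
  · intro i _ hij
    simp [Function.update_of_ne hij]
  · simp

/-- One averaging step over signs. -/
lemma sum_norm_le_of_signs {𝕜 : Type*} [RCLike 𝕜] {E : Type*} [NormedAddCommGroup E]
    [NormedSpace 𝕜 E] {m : ℕ} (y : Fin m → E) (g : Fin m → E →ₗ[𝕜] 𝕜) (B : ℝ)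
    (hB : ∀ ε : Fin m → Bool, ∑ j, ‖g j (∑ i, (if ε i then y i else -y i))‖ ≤ B) :
    ∑ j, ‖g j (y j)‖ ≤ B := by
  set Y : (Fin m → Bool) → E := fun ε => ∑ i, (if ε i then y i else -y i) with hY
  have h1 : ∀ j, (2:ℝ) ^ m * ‖g j (y j)‖ ≤ ∑ ε, ‖g j (Y ε)‖ := by
    intro j
    have hinv : Function.Involutive (fun ε : Fin m → Bool => Function.update ε j (!ε j)) := by
      intro ε
      simp
    have e1 : ∑ ε, ‖g j (Y (Function.update ε j (!ε j)))‖ = ∑ ε, ‖g j (Y ε)‖ :=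
      Equiv.sum_comp hinv.toPerm (fun ε => ‖g j (Y ε)‖)
    have h2 : ∀ ε, 2 * ‖g j (y j)‖ ≤ ‖g j (Y ε)‖ + ‖g j (Y (Function.update ε j (!ε j)))‖ := by
      intro ε
      refine le_trans (le_of_eq ?_) (norm_sub_le _ _)
      rw [← map_sub, signSum_sub_flip]
      have : ‖g j (y j) + g j (y j)‖ = 2 * ‖g j (y j)‖ := by
        rw [← two_mul, norm_mul]; simp
      split_ifs
      · rw [map_add, this]
      · rw [map_neg, norm_neg, map_add, this]
    have h3 := Finset.sum_le_sum (fun ε (_ : ε ∈ Finset.univ) => h2 ε)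
    rw [Finset.sum_add_distrib, e1] at h3
    simp at h3
    linarith
  have h4 : (2:ℝ) ^ m * ∑ j, ‖g j (y j)‖ ≤ 2 ^ m * B := by
    rw [Finset.mul_sum]
    refine (Finset.sum_le_sum fun j _ => h1 j).trans ?_
    rw [Finset.sum_comm]
    refine (Finset.sum_le_sum fun ε _ => hB ε).trans ?_
    simp
  exact le_of_mul_le_mul_left h4 (by positivity)

lemma weakLpNorm_nonneg' (𝕜 : Type*) [RCLike 𝕜] {E : Type*} [NormedAddCommGroup E]
    [NormedSpace 𝕜 E] (q : ℝ) {m : ℕ} (x : Fin m → E) : 0 ≤ weakLpNorm 𝕜 q x :=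
  Real.iSup_nonneg fun _ => by positivity

lemma norm_signSum_le_weak (𝕜 : Type*) [RCLike 𝕜] {E : Type*} [NormedAddCommGroup E]
    [NormedSpace 𝕜 E] {m : ℕ} (y : Fin m → E) (ε : Fin m → Bool) :
    ‖∑ i, (if ε i then y i else -y i)‖ ≤ weakLpNorm 𝕜 1 y := by
  obtain ⟨g, hg, hgx⟩ := exists_dual_vector'' 𝕜 (∑ i, (if ε i then y i else -y i))
  have hbdd : BddAbove (Set.range fun φ : {φ : E →L[𝕜] 𝕜 // ‖φ‖ ≤ 1} =>
      (∑ j, ‖φ.1 (y j)‖ ^ (1:ℝ)) ^ (1 / (1:ℝ))) := by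
    refine ⟨∑ j, ‖y j‖, ?_⟩
    rintro _ ⟨φ, rfl⟩
    simp only [Real.rpow_one, div_one]
    refine Finset.sum_le_sum fun j _ => ?_
    exact (φ.1.le_of_opNorm_le φ.2 (y j)).trans (by simp)
  refine le_trans ?_ (le_ciSup hbdd ⟨g, hg⟩)
  simp only [Real.rpow_one, div_one]
  have : ‖∑ i, (if ε i then y i else -y i)‖ = ‖g (∑ i, (if ε i then y i else -y i))‖ := by
    rw [hgx]; simp
  rw [this, map_sum]
  refine (norm_sum_le _ _).trans (Finset.sum_le_sum fun j _ => ?_)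
  split_ifs <;> simp

/-- Uniform constant via Banach–Steinhaus. -/
lemma uniform_summing {𝕜 : Type*} [RCLike 𝕜] {ι : Type*} [Fintype ι]
    {E : ι → Type*} [∀ i, NormedAddCommGroup (E i)] [∀ i, NormedSpace 𝕜 (E i)]
    {q' : ι → ℝ}
    (H : ∀ T : ContinuousMultilinearMap 𝕜 E 𝕜, ∃ C, 0 ≤ C ∧ AbsSummingWith 𝕜 1 q' C ⇑T) :
    ∃ C, 0 ≤ C ∧ ∀ T : ContinuousMultilinearMap 𝕜 E 𝕜, ∀ (m : ℕ) (x : ∀ i, Fin m → E i),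
      ∑ j, ‖T (fun i => x i j)‖ ≤ C * ‖T‖ * ∏ i, weakLpNorm 𝕜 (q' i) (x i) := by
  have H' : ∀ T : ContinuousMultilinearMap 𝕜 E 𝕜, ∃ C, 0 ≤ C ∧
      ∀ (m : ℕ) (x : ∀ i, Fin m → E i),
      ∑ j, ‖T (fun i => x i j)‖ ≤ C * ∏ i, weakLpNorm 𝕜 (q' i) (x i) := by
    intro T
    obtain ⟨C, hC, h⟩ := H T
    refine ⟨C, hC, fun m x => ?_⟩
    have := h m x
    simpa only [Real.rpow_one, div_one] using this
  let I := Σ m : ℕ, (∀ i, Fin m → E i) × {θ : Fin m → 𝕜 // ∀ j, ‖θ j‖ ≤ 1}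
  let P : I → ℝ := fun a => ∏ i, weakLpNorm 𝕜 (q' i) (a.2.1 i)
  have hP : ∀ a, 0 ≤ P a := fun a => Finset.prod_nonneg fun i _ => weakLpNorm_nonneg' _ _ _
  let g : I → ContinuousMultilinearMap 𝕜 E 𝕜 →L[𝕜] 𝕜 := fun a =>
    ((P a)⁻¹ : 𝕜) • ∑ j, a.2.2.1 j • ContinuousMultilinearMap.apply 𝕜 E 𝕜 (fun i => a.2.1 i j)
  have hg : ∀ a T, g a T = ((P a)⁻¹ : 𝕜) * ∑ j, a.2.2.1 j * T (fun i => a.2.1 i j) := by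
    intro a T
    simp [g, ContinuousMultilinearMap.apply]
  obtain ⟨C, hC⟩ := banach_steinhaus (g := g) (by
    intro T
    obtain ⟨C, hC0, hC⟩ := H' T
    refine ⟨C, fun a => ?_⟩
    rw [hg, norm_mul]
    have h1 : ‖∑ j, a.2.2.1 j * T (fun i => a.2.1 i j)‖ ≤ C * P a := by
      refine (norm_sum_le _ _).trans (le_trans (Finset.sum_le_sum fun j _ => ?_) (hC a.1 a.2.1))
      rw [norm_mul]
      exact mul_le_of_le_one_left (norm_nonneg _) (a.2.2.2 j)
    have h2 : ‖((P a)⁻¹ : 𝕜)‖ = (P a)⁻¹ := by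
      rw [norm_inv, RCLike.norm_ofReal, abs_of_nonneg (hP a)]
    rw [h2]
    rcases (hP a).eq_or_lt with h | h
    · rw [← h]; simpa using hC0
    · rw [inv_mul_le_iff₀ h, mul_comm]; exact h1)
  have hC0 : 0 ≤ C := by
    refine (norm_nonneg _).trans (hC ⟨0, fun i j => j.elim0, ⟨fun j => j.elim0, fun j => j.elim0⟩⟩)
  refine ⟨C, hC0, fun T m x => ?_⟩
  have hth : ∀ z : 𝕜, ∃ θ : 𝕜, ‖θ‖ ≤ 1 ∧ θ * z = ‖z‖ := by
    intro z
    obtain ⟨c, hc, hcz⟩ := RCLike.exists_norm_mul_eq_self z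
    by_cases hz : z = 0
    · exact ⟨0, by simp, by simp [hz]⟩
    · refine ⟨c⁻¹, by simp [hc], ?_⟩
      have : c ≠ 0 := by rintro rfl; simp at hc
      rw [inv_mul_eq_iff_eq_mul₀ this, hcz]
  choose θ hθ1 hθ2 using hth
  let a : I := ⟨m, x, ⟨fun j => θ (T (fun i => x i j)), fun j => hθ1 _⟩⟩
  have h1 := (g a).le_of_opNorm_le (hC a) T
  have h3 : ∑ j, a.2.2.1 j * T (fun i => a.2.1 i j) = ((∑ j, ‖T (fun i => x i j)‖ : ℝ) : 𝕜) := by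
    simp only [a, hθ2]
    push_cast
    rfl
  have h2 : ‖((P a)⁻¹ : 𝕜)‖ = (P a)⁻¹ := by
    rw [norm_inv, RCLike.norm_ofReal, abs_of_nonneg (hP a)]
  rw [hg, h3, norm_mul, h2, RCLike.norm_ofReal,
    abs_of_nonneg (Finset.sum_nonneg fun _ _ => norm_nonneg _)] at h1
  change _ ≤ C * ‖T‖ * P a
  rcases (hP a).eq_or_lt with h | h
  · obtain ⟨C', _, h'⟩ := H' T
    have := h' m x
    change _ ≤ C' * P a at this
    rw [← h] at this ⊢
    simpa using this
  · rw [inv_mul_le_iff₀ h] at h1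
    linarith

lemma core_sum {𝕜 : Type*} [RCLike 𝕜] {s k : ℕ} {V : Fin s ⊕ Fin k → Type*}
    [∀ i, NormedAddCommGroup (V i)] [∀ i, NormedSpace 𝕜 (V i)]
    {q' : Fin s → ℝ} {C : ℝ} (hC0 : 0 ≤ C)
    (hC : ∀ T : ContinuousMultilinearMap 𝕜 (fun i => V (Sum.inl i)) 𝕜, ∀ (m : ℕ)
      (x : ∀ i, Fin m → V (Sum.inl i)),
      ∑ j, ‖T (fun i => x i j)‖ ≤ C * ‖T‖ * ∏ i, weakLpNorm 𝕜 (q' i) (x i))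
    (T : ContinuousMultilinearMap 𝕜 V 𝕜) (m : ℕ) (x : ∀ i, Fin m → V (Sum.inl i))
    (W : Fin k → ℝ) (hW : ∀ l, 0 ≤ W l) (S : Finset (Fin k)) :
    ∀ z : ∀ l, Fin m → V (Sum.inr l),
      (∀ l, l ∉ S → ∃ c, ‖c‖ ≤ W l ∧ ∀ j, z l j = c) →
      (∀ l ∈ S, ∀ ε : Fin m → Bool, ‖∑ j, (if ε j then z l j else -z l j)‖ ≤ W l) →
      ∑ j, ‖T (Sum.rec (fun i => x i j) (fun l => z l j))‖ ≤
        C * (‖T‖ * ∏ l, W l) * ∏ i, weakLpNorm 𝕜 (q' i) (x i) := by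
  induction S using Finset.induction_on with
  | empty =>
    intro z hz _
    choose c hc hzc using fun l => hz l (Finset.notMem_empty l)
    let A : MultilinearMap 𝕜 (fun i => V (Sum.inl i)) 𝕜 :=
      { toFun u := T (Sum.rec u c)
        map_update_add' := by intro; simp
        map_update_smul' := by intro; simp }
    have hA : ∀ u, ‖A u‖ ≤ (‖T‖ * ∏ l, W l) * ∏ i, ‖u i‖ := by
      intro u
      refine (T.le_opNorm _).trans ?_
      rw [Fintype.prod_sum_type, mul_assoc, mul_comm (∏ l, W l)]
      have : ∏ l, ‖c l‖ ≤ ∏ l, W l := Finset.prod_le_prod (fun _ _ => norm_nonneg _) fun l _ => hc l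
      refine mul_le_mul_of_nonneg_left ?_ (norm_nonneg _)
      exact mul_le_mul_of_nonneg_left this (Finset.prod_nonneg fun _ _ => norm_nonneg _)
    have hn : 0 ≤ ‖T‖ * ∏ l, W l := mul_nonneg (norm_nonneg _) (Finset.prod_nonneg fun l _ => hW l)
    have h1 := hC (A.mkContinuous _ hA) m x
    have h2 : ∀ j, (A.mkContinuous _ hA) (fun i => x i j) =
        T (Sum.rec (fun i => x i j) (fun l => z l j)) := by
      intro j
      have : (fun l => z l j) = c := funext fun l => hzc l j
      rw [this]; rfl
    simp only [h2] at h1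
    refine h1.trans ?_
    refine mul_le_mul_of_nonneg_right ?_ (Finset.prod_nonneg fun i _ => weakLpNorm_nonneg' _ _ _)
    exact mul_le_mul_of_nonneg_left (A.mkContinuous_norm_le hn hA) hC0
  | insert l S hl ih =>
    intro z hz1 hz2
    let g : Fin m → V (Sum.inr l) →ₗ[𝕜] 𝕜 := fun j =>
      T.toMultilinearMap.toLinearMap (Sum.rec (fun i => x i j) (fun l => z l j)) (Sum.inr l)
    have key := sum_norm_le_of_signs (𝕜 := 𝕜) (z l) g
      (C * (‖T‖ * ∏ l, W l) * ∏ i, weakLpNorm 𝕜 (q' i) (x i)) (by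
        intro ε
        have := ih (Function.update z l (fun _ => ∑ i, (if ε i then z l i else -z l i))) (by
          intro l' hl'
          by_cases h : l' = l
          · subst h
            exact ⟨_, hz2 l' (Finset.mem_insert_self _ _) ε, fun j => by simp⟩
          · rw [Function.update_of_ne h]
            exact hz1 l' (by simp [h, hl'])) (by
          intro l' hl'
          have h : l' ≠ l := by rintro rfl; exact hl hl'
          rw [Function.update_of_ne h]
          exact hz2 l' (Finset.mem_insert_of_mem hl'))
        refine le_trans (le_of_eq ?_) this
        refine Finset.sum_congr rfl fun j _ => ?_
        congr 1
        change T (Function.update _ _ _) = _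
        rw [← Sum.rec_update_right]
        congr 2
        funext t
        rcases t with t | l'
        · rfl
        · change Function.update (fun l => z l j) l _ l' = Function.update z l _ l' j
          by_cases h : l' = l
          · subst h; simp
          · simp [Function.update_of_ne h])
    refine le_trans (le_of_eq ?_) key
    refine Finset.sum_congr rfl fun j _ => ?_
    congr 1
    change _ = T (Function.update _ _ _)
    rw [← Sum.rec_update_right]
    rw [Function.update_eq_self l (fun l => z l j)]

lemma absSumming_general {𝕜 : Type*} [RCLike 𝕜] {s k : ℕ} {V : Fin s ⊕ Fin k → Type*}
    [∀ i, NormedAddCommGroup (V i)] [∀ i, NormedSpace 𝕜 (V i)]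
    {F : Type*} [NormedAddCommGroup F] [NormedSpace 𝕜 F]
    {q : ℝ} (hF : HasCotype q F)
    {q' : Fin s → ℝ}
    (H : ∀ T : ContinuousMultilinearMap 𝕜 (fun i => V (Sum.inl i)) 𝕜,
      ∃ C, 0 ≤ C ∧ AbsSummingWith 𝕜 1 q' C ⇑T)
    (T : ContinuousMultilinearMap 𝕜 V F) :
    ∃ C, 0 ≤ C ∧ AbsSummingWith 𝕜 q (Sum.elim q' (fun _ => 1)) C ⇑T := by
  obtain ⟨C, hC0, hC⟩ := uniform_summing H
  obtain ⟨K, hK0, hK⟩ := hF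
  refine ⟨K * (C * ‖T‖), by positivity, fun m x => ?_⟩
  have hWn : ∀ l : Fin k, 0 ≤ weakLpNorm 𝕜 1 (x (Sum.inr l)) := fun l => weakLpNorm_nonneg' _ _ _
  have hxn : ∀ i : Fin s, 0 ≤ weakLpNorm 𝕜 (q' i) (x (Sum.inl i)) :=
    fun l => weakLpNorm_nonneg' _ _ _
  set B : ℝ := C * (‖T‖ * ∏ l, weakLpNorm 𝕜 1 (x (Sum.inr l))) *
    ∏ i, weakLpNorm 𝕜 (q' i) (x (Sum.inl i)) with hBdef
  have hpW : 0 ≤ ∏ l, weakLpNorm 𝕜 1 (x (Sum.inr l)) := Finset.prod_nonneg fun l _ => hWn l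
  have hpx : 0 ≤ ∏ i, weakLpNorm 𝕜 (q' i) (x (Sum.inl i)) := Finset.prod_nonneg fun l _ => hxn l
  have hB : 0 ≤ B := by positivity
  have hrhs : K * (C * ‖T‖) * ∏ i, weakLpNorm 𝕜 (Sum.elim q' (fun _ => 1) i) (x i) = K * B := by
    rw [Fintype.prod_sum_type, hBdef]
    simp only [Sum.elim_inl, Sum.elim_inr]
    ring
  rw [hrhs]
  refine (hK m _).trans (mul_le_mul_of_nonneg_left ?_ hK0)
  have hsign : ∀ ε : Fin m → Bool,
      ‖∑ j, (if ε j then T (fun i => x i j) else -T (fun i => x i j))‖ ≤ B := by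
    intro ε
    obtain ⟨φ, hφ, hφx⟩ := exists_dual_vector'' 𝕜
      (∑ j, (if ε j then T (fun i => x i j) else -T (fun i => x i j)))
    have e : ‖∑ j, (if ε j then T (fun i => x i j) else -T (fun i => x i j))‖ =
      ‖φ (∑ j, (if ε j then T (fun i => x i j) else -T (fun i => x i j)))‖ := by
      rw [hφx]; simp
    rw [e, map_sum]
    have h1 := core_sum hC0 hC (φ.compContinuousMultilinearMap T) m (fun i => x (Sum.inl i))
      (fun l => weakLpNorm 𝕜 1 (x (Sum.inr l))) hWn Finset.univ (fun l => x (Sum.inr l))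
      (fun l hl => absurd (Finset.mem_univ l) hl)
      (fun l _ ε => norm_signSum_le_weak 𝕜 _ ε)
    have h2 : ‖φ.compContinuousMultilinearMap T‖ ≤ ‖T‖ :=
      (φ.norm_compContinuousMultilinearMap_le T).trans
        (mul_le_of_le_one_left (norm_nonneg _) hφ)
    refine (norm_sum_le _ _).trans (le_trans (le_trans (le_of_eq ?_) h1) ?_)
    · refine Finset.sum_congr rfl fun j _ => ?_
      have h3 : (Sum.rec (fun i => x (Sum.inl i) j) (fun l => x (Sum.inr l) j) : ∀ i, V i) =
          fun i => x i j := by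
        funext i; cases i <;> rfl
      rw [h3]
      split_ifs <;> simp
    · rw [hBdef]
      gcongr
  rw [← Real.sqrt_eq_rpow]
  refine Real.sqrt_le_iff.2 ⟨hB, ?_⟩
  rw [div_le_iff₀ (by positivity)]
  refine (Finset.sum_le_sum (g := fun _ => B ^ 2) fun ε _ => ?_).trans ?_
  · rw [Real.rpow_two]
    have := hsign ε
    gcongr
  · simp [mul_comm]

/-- If `F` has cotype `q` (`2 ≤ q`) and every continuous `s`-linear scalar
form on `E₁ × ⋯ × E_s` is absolutely `(1; q₁,…,q_s)`-summing, then for any further Banach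
spaces `G₁,…,G_k`, every continuous multilinear map from `E₁ × ⋯ × E_s × G₁ × ⋯ × G_k` into
`F` is absolutely `(q; q₁,…,q_s,1,…,1)`-summing. -/
theorem absSumming_cotype_extend {𝕜 : Type v} [RCLike 𝕜] {s k : ℕ} (hs : 1 ≤ s)
    {E : Fin s → Type u} [∀ i, NormedAddCommGroup (E i)] [∀ i, NormedSpace 𝕜 (E i)]
    [∀ i, CompleteSpace (E i)]
    {F : Type*} [NormedAddCommGroup F] [NormedSpace 𝕜 F] [CompleteSpace F]
    {q : ℝ} (hq2 : 2 ≤ q) (hF : HasCotype q F)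
    {q' : Fin s → ℝ} (hq' : ∀ i, 1 ≤ q' i)
    (H : ∀ T : ContinuousMultilinearMap 𝕜 E 𝕜, ∃ C, 0 ≤ C ∧ AbsSummingWith 𝕜 1 q' C ⇑T) :
    ∀ (G : Fin k → Type u) [∀ j, NormedAddCommGroup (G j)] [∀ j, NormedSpace 𝕜 (G j)]
      [∀ j, CompleteSpace (G j)],
      letI : ∀ i : Fin s ⊕ Fin k, NormedAddCommGroup (Sum.elim E G i) := fun i =>
        Sum.rec (motive := fun i => NormedAddCommGroup (Sum.elim E G i))
          (fun a => inferInstanceAs (NormedAddCommGroup (E a)))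
          (fun b => inferInstanceAs (NormedAddCommGroup (G b))) i
      letI : ∀ i : Fin s ⊕ Fin k, NormedSpace 𝕜 (Sum.elim E G i) := fun i =>
        Sum.rec (motive := fun i => NormedSpace 𝕜 (Sum.elim E G i))
          (fun a => inferInstanceAs (NormedSpace 𝕜 (E a)))
          (fun b => inferInstanceAs (NormedSpace 𝕜 (G b))) i
      ∀ T : ContinuousMultilinearMap 𝕜 (Sum.elim E G) F,
        ∃ C, 0 ≤ C ∧ AbsSummingWith 𝕜 q (Sum.elim q' (fun _ => 1)) C ⇑T := by
  intro G _ _ _ T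
  exact @absSumming_general 𝕜 _ s k (Sum.elim E G)
    (fun i => Sum.rec (motive := fun i => NormedAddCommGroup (Sum.elim E G i))
          (fun a => inferInstanceAs (NormedAddCommGroup (E a)))
          (fun b => inferInstanceAs (NormedAddCommGroup (G b))) i)
    (fun i => Sum.rec (motive := fun i => @NormedSpace 𝕜 (Sum.elim E G i) _
          (@NormedAddCommGroup.toSeminormedAddCommGroup _
            (Sum.rec (motive := fun i => NormedAddCommGroup (Sum.elim E G i))
              (fun a => inferInstanceAs (NormedAddCommGroup (E a)))
              (fun b => inferInstanceAs (NormedAddCommGroup (G b))) i)))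
          (fun a => inferInstanceAs (NormedSpace 𝕜 (E a)))
          (fun b => inferInstanceAs (NormedSpace 𝕜 (G b))) i)
    F _ _ q hF q' H T
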